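/- Perfect security of secret sharing against superposition attacks (Theorem 1 of Damgård–Funder–Nielsen–Salvail, as proved in the appendix): Let n, k ∈ ℕ, let 𝕊 be a type of secrets, R a finite type of randomness, and p : R → ℝ with p(r) ≥ 0 for all r. For each party i ∈ Fin n let v_i : 𝕊 → R → {0,1}^k be its share. For A ⊆ Fin n define the padded joint view w_A(s, r) : Fin n → {0,1}^k by w_A(s,r)(i) = v_i(s, r) if i ∈ A and the all-zero string otherwise. Let F be a family of subsets of Fin n, and assume perfect security against classical F²-attacks: for all A, A' ∈ F, all s, s' ∈ 𝕊, and every u : Fin n → {0,1}^k, Σ_{r : ∀ i ∈ A ∪ A', v_i(s, r) = u(i)} p(r) = Σ_{r : ∀ i ∈ A ∪ A', v_i(s', r) = u(i)} p(r). Let X be a finite type (the adversary's environment register) and let α : X × Finset(Fin n) × (Fin n → {0,1}^k) → ℂ be arbitrary amplitudes. For s ∈ 𝕊 and r ∈ R define the vector ψ_s(r) = Σ_{x ∈ X} Σ_{A ∈ F} Σ_{a : Fin n → {0,1}^k} α(x, A, a) · e_{(x, A, a ⊕ w_A(s,r))} in ℂ^(X × Finset(Fin n) × (Fin n → {0,1}^k)),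 where ⊕ is componentwise bitwise XOR, and define the adversary's final state ρ_s = Σ_{r ∈ R} p(r) · ψ_s(r) ψ_s(r)^*. Then for all s, s' ∈ 𝕊, ρ_s = ρ_{s'}; that is, the scheme is perfectly secure against superposition F-attacks. -/

import Mathlib

open scoped BigOperators

/-- The padded joint view of the parties in `A`: party `i`'s share if `i ∈ A`,
and the all-zero string otherwise. -/
def paddedView (n k : ℕ) {𝕊 R : Type*}
    (v : Fin n → 𝕊 → R → (Fin k → ZMod 2))
    (A : Finset (Fin n)) (s : 𝕊) (r : R) : Fin n → (Fin k → ZMod 2) :=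
  fun i => if i ∈ A then v i s r else 0

/-- The state `ψ_s(r)` obtained from the adversary's superposition query:
`∑_{x, A ∈ F, a} α(x, A, a) · e_{(x, A, a ⊕ w_A(s,r))}`. -/
noncomputable def advQueryState (n k : ℕ) {𝕊 R X : Type*} [DecidableEq X]
    (v : Fin n → 𝕊 → R → (Fin k → ZMod 2)) (F : Finset (Finset (Fin n)))
    (α : X × Finset (Fin n) × (Fin n → Fin k → ZMod 2) → ℂ)
    (s : 𝕊) (r : R) [Fintype X] :
    X × Finset (Fin n) × (Fin n → Fin k → ZMod 2) → ℂ :=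
  ∑ x : X, ∑ A ∈ F, ∑ a : Fin n → Fin k → ZMod 2,
    α (x, A, a) •
      (Pi.single (x, A, a + paddedView n k v A s r) 1 :
        X × Finset (Fin n) × (Fin n → Fin k → ZMod 2) → ℂ)

/-! The entry of `ρ_s` between two basis states that carry the queries `A` and `A'` is an average,
over the randomness `r`, of a function of the two padded views `w_A(s, r)` and `w_A'(s, r)` alone.
Both views are determined by the shares of `A ∪ A' ∈ F²`, whose joint law is the same for every
secret, and an average only depends on the law of what is averaged. -/

/-- `g` under the weights `p` and `g'` under the weights `p'` have the same law: every value
receives the same total weight. This is a finite version of `ProbabilityTheory.IdentDistrib`, for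
weights in an arbitrary commutative monoid. -/
def SameLaw {R R' U S : Type*} [Fintype R] [Fintype R'] [DecidableEq U] [AddCommMonoid S]
    (p : R → S) (p' : R' → S) (g : R → U) (g' : R' → U) : Prop :=
  ∀ u, ∑ r with g r = u, p r = ∑ r with g' r = u, p' r

theorem sum_apply_comp_eq_sum_apply_fiber {R U S M : Type*} [Fintype R] [DecidableEq U]
    [AddCommMonoid S] [AddCommMonoid M] (p : R → S) (g : R → U) (f : U → S →+ M)
    {T : Finset U} (hT : ∀ r, g r ∈ T) :
    ∑ r, f (g r) (p r) = ∑ u ∈ T, f u (∑ r with g r = u, p r) := by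
  rw [← Finset.sum_fiberwise_of_maps_to fun r _ => hT r]
  refine Finset.sum_congr rfl fun u _ => ?_
  rw [map_sum]
  exact Finset.sum_congr rfl fun r hr => by rw [(Finset.mem_filter.mp hr).2]

namespace SameLaw

variable {R R' U S : Type*} [Fintype R] [Fintype R'] [DecidableEq U] [AddCommMonoid S]
  {p : R → S} {p' : R' → S} {g : R → U} {g' : R' → U}

theorem sum_apply_eq {M : Type*} [AddCommMonoid M] (h : SameLaw p p' g g') (f : U → S →+ M) :
    ∑ r, f (g r) (p r) = ∑ r, f (g' r) (p' r) := by
  let T := Finset.univ.image g ∪ Finset.univ.image g'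
  have hg (r : R) : g r ∈ T := by simp [T]
  have hg' (r : R') : g' r ∈ T := by simp [T]
  rw [sum_apply_comp_eq_sum_apply_fiber p g f hg, sum_apply_comp_eq_sum_apply_fiber p' g' f hg']
  exact Finset.sum_congr rfl fun u _ => congrArg (f u) (h u)

theorem comp {W : Type*} [DecidableEq W] (h : SameLaw p p' g g') (φ : U → W) :
    SameLaw p p' (fun r => φ (g r)) (fun r => φ (g' r)) := by
  intro y
  simpa [Finset.sum_filter, DFunLike.ite_apply] using
    h.sum_apply_eq fun u => if φ u = y then AddMonoidHom.id S else 0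

end SameLaw

section Query

variable {X Q Y : Type*} [Fintype X] [DecidableEq X] [DecidableEq Q]
  [AddGroup Y] [Fintype Y] [DecidableEq Y]

/-- The state `∑_{x, q ∈ F, a} α(x, q, a) · e_{(x, q, a + O(q))}` left by one superposition query,
restricted to `F`, to an oracle `O`. The answer is added to the last register; `advQueryState` is
the case where `O` sends a set of parties to its padded joint view. -/
noncomputable def oracleQueryState (F : Finset Q) (α : X × Q × Y → ℂ) (O : Q → Y) :
    X × Q × Y → ℂ :=
  ∑ x : X, ∑ q ∈ F, ∑ a : Y, α (x, q, a) • Pi.single (x, q, a + O q) 1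

theorem oracleQueryState_apply (F : Finset Q) (α : X × Q × Y → ℂ) (O : Q → Y)
    (x : X) (q : Q) (b : Y) :
    oracleQueryState F α O (x, q, b) = if q ∈ F then α (x, q, b - O q) else 0 := by
  simp [oracleQueryState, Pi.single_apply, ite_and, ← sub_eq_iff_eq_add]

/-- The mixture `∑_r p(r) ψ(r) ψ(r)^*` of the states `ψ(r)` left by one superposition query to an
oracle `O r` drawn with weight `p r`. The weights are not required to be probabilities. -/
noncomputable def oracleQueryDensity {R : Type*} [Fintype R] (p : R → ℂ) (F : Finset Q)
    (α : X × Q × Y → ℂ) (O : R → Q → Y) : Matrix (X × Q × Y) (X × Q × Y) ℂ :=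
  ∑ r, p r • Matrix.vecMulVec (oracleQueryState F α (O r)) (star (oracleQueryState F α (O r)))

theorem oracleQueryDensity_apply {R : Type*} [Fintype R] (p : R → ℂ) (F : Finset Q)
    (α : X × Q × Y → ℂ) (O : R → Q → Y) (x x' : X) (q q' : Q) (b b' : Y) :
    oracleQueryDensity p F α O (x, q, b) (x', q', b') =
      if q ∈ F ∧ q' ∈ F then
        ∑ r, p r • (α (x, q, b - O r q) * star (α (x', q', b' - O r q')))
      else 0 := by
  by_cases hq : q ∈ F <;> by_cases hq' : q' ∈ F <;>
    simp [oracleQueryDensity, Matrix.sum_apply, Matrix.vecMulVec_apply, oracleQueryState_apply,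
      hq, hq']

theorem oracleQueryDensity_eq_of_sameLaw_pairs {R R' : Type*} [Fintype R] [Fintype R']
    {p : R → ℂ} {p' : R' → ℂ} {F : Finset Q} {O : R → Q → Y} {O' : R' → Q → Y}
    (h : ∀ q ∈ F, ∀ q' ∈ F,
      SameLaw p p' (fun r => (O r q, O r q')) (fun r => (O' r q, O' r q')))
    (α : X × Q × Y → ℂ) :
    oracleQueryDensity p F α O = oracleQueryDensity p' F α O' := by
  ext ⟨x, q, b⟩ ⟨x', q', b'⟩
  rw [oracleQueryDensity_apply, oracleQueryDensity_apply]
  refine if_ctx_congr Iff.rfl (fun ⟨hq, hq'⟩ => ?_) fun _ => rfl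
  exact (h q hq q' hq').sum_apply_eq
    fun y => AddMonoidHom.mulRight (α (x, q, b - y.1) * star (α (x', q', b' - y.2)))

end Query

section Shares

variable {ι R R' S : Type*} {G : ι → Type*} [∀ i, DecidableEq (G i)]
  [Fintype R] [Fintype R'] [AddCommMonoid S] {p : R → S} {p' : R' → S}
  {v : R → ∀ i, G i} {v' : R' → ∀ i, G i}

theorem sameLaw_restrict_iff [∀ i, Nonempty (G i)] {B : Finset ι} :
    SameLaw p p' (fun r => B.restrict (v r)) (fun r => B.restrict (v' r)) ↔
      ∀ u : ∀ i, G i,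
        ∑ r with ∀ i ∈ B, v r i = u i, p r = ∑ r with ∀ i ∈ B, v' r i = u i, p' r := by
  have restrict_eq_iff (w u : ∀ i, G i) : B.restrict w = B.restrict u ↔ ∀ i ∈ B, w i = u i := by
    simp [funext_iff]
  have restrict_surjective : Function.Surjective (B.restrict (π := G)) :=
    Subtype.surjective_restrict (· ∈ B)
  simp only [SameLaw, restrict_surjective.forall, restrict_eq_iff]

theorem sameLaw_piecewise_pair [Fintype ι] [DecidableEq ι] {A A' : Finset ι}
    (h : SameLaw p p' (fun r => (A ∪ A').restrict (v r)) (fun r => (A ∪ A').restrict (v' r)))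
    (c : ∀ i, G i) :
    SameLaw p p' (fun r => (A.piecewise (v r) c, A'.piecewise (v r) c))
      (fun r => (A.piecewise (v' r) c, A'.piecewise (v' r) c)) := by
  have updateFinset_restrict_eq (w : ∀ i, G i) :
      Function.updateFinset c (A ∪ A') ((A ∪ A').restrict w) = (A ∪ A').piecewise w c := rfl
  simpa only [updateFinset_restrict_eq,
    Finset.piecewise_piecewise_of_subset_left Finset.subset_union_left,
    Finset.piecewise_piecewise_of_subset_left Finset.subset_union_right] using
    h.comp fun t =>
      let w := Function.updateFinset c (A ∪ A') t
      (A.piecewise w c, A'.piecewise w c)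

end Shares

theorem advQueryState_eq_oracleQueryState (n k : ℕ) {𝕊 R X : Type*} [DecidableEq X] [Fintype X]
    (v : Fin n → 𝕊 → R → (Fin k → ZMod 2)) (F : Finset (Finset (Fin n)))
    (α : X × Finset (Fin n) × (Fin n → Fin k → ZMod 2) → ℂ) (s : 𝕊) (r : R) :
    advQueryState n k v F α s r
      = oracleQueryState F α fun A => A.piecewise (fun i => v i s r) 0 :=
  rfl

theorem secret_sharing_superposition_secure_general
    {ι R R' X : Type*} {G : ι → Type*} [Fintype ι] [DecidableEq ι]
    [∀ i, AddGroup (G i)] [∀ i, Fintype (G i)] [∀ i, DecidableEq (G i)]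
    [Fintype R] [Fintype R'] [Fintype X] [DecidableEq X]
    {p : R → ℂ} {p' : R' → ℂ} {v : R → ∀ i, G i} {v' : R' → ∀ i, G i} {F : Finset (Finset ι)}
    (hsec : ∀ A ∈ F, ∀ A' ∈ F,
      SameLaw p p' (fun r => (A ∪ A').restrict (v r)) (fun r => (A ∪ A').restrict (v' r)))
    (α : X × Finset ι × (∀ i, G i) → ℂ) :
    oracleQueryDensity p F α (fun r A => A.piecewise (v r) 0)
      = oracleQueryDensity p' F α (fun r A => A.piecewise (v' r) 0) :=
  oracleQueryDensity_eq_of_sameLaw_pairs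
    (fun A hA A' hA' => sameLaw_piecewise_pair (hsec A hA A' hA') 0) α

/-- Perfect security of secret sharing against superposition attacks
(Theorem 1 of Damgård–Funder–Nielsen–Salvail): if the scheme is perfectly secure
against classical `F²`-attacks, then the adversary's final state
`ρ_s = ∑_r p(r) ψ_s(r) ψ_s(r)^*` after a superposition `F`-attack does not depend
on the secret `s`. -/
theorem secret_sharing_superposition_secure
    (n k : ℕ) {𝕊 R X : Type*} [Fintype R] [Fintype X] [DecidableEq X]
    (p : R → ℝ) (hp : ∀ r, 0 ≤ p r)
    (v : Fin n → 𝕊 → R → (Fin k → ZMod 2))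
    (F : Finset (Finset (Fin n)))
    (hsec : ∀ A ∈ F, ∀ A' ∈ F, ∀ s s' : 𝕊, ∀ u : Fin n → (Fin k → ZMod 2),
      ∑ r ∈ Finset.univ.filter (fun r : R => ∀ i ∈ A ∪ A', v i s r = u i), p r
        = ∑ r ∈ Finset.univ.filter (fun r : R => ∀ i ∈ A ∪ A', v i s' r = u i), p r)
    (α : X × Finset (Fin n) × (Fin n → Fin k → ZMod 2) → ℂ)
    (s s' : 𝕊) :
    ∑ r : R, (p r : ℂ) •
        Matrix.vecMulVec (advQueryState n k v F α s r) (star (advQueryState n k v F α s r))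
      = ∑ r : R, (p r : ℂ) •
        Matrix.vecMulVec (advQueryState n k v F α s' r) (star (advQueryState n k v F α s' r)) := by
  simp only [advQueryState_eq_oracleQueryState]
  exact secret_sharing_superposition_secure_general (fun A hA A' hA' => sameLaw_restrict_iff.mpr
    fun u => by simpa using congrArg Complex.ofReal (hsec A hA A' hA' s s' u)) α
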